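/- Let k* be an integer with m < k* < N. Assume ĉ_si(s) ≥ 0 for every s with k* < s ≤ N, and assume Γ(k*) ≥ g_ef(s) for every s with k* < s ≤ N. Then for every probability vector p (p(s) ≥ 0 for all s and ∑_{s=1}^N p(s) = 1), z(p, ĉ) ≤ Γ(k*). -/

import Mathlib

open Finset

noncomputable def Hfun (gef gsi gin : ℕ → ℝ) (m k : ℕ) : ℝ :=
  (∑ s ∈ Finset.Icc 1 (min k m), 1 / (gsi s + gin s)) +
    ∑ s ∈ Finset.Icc (m + 1) k, 1 / (gef s + gin s)

noncomputable def Gfun (gef gsi gin : ℕ → ℝ) (m k : ℕ) : ℝ :=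
  (∑ s ∈ Finset.Icc 1 (min k m), gsi s / (gsi s + gin s)) +
    ∑ s ∈ Finset.Icc (m + 1) k, gef s / (gef s + gin s)

noncomputable def Gam (gef gsi gin : ℕ → ℝ) (kef ksi N m k : ℕ) : ℝ :=
  ((kef : ℝ) + (ksi : ℝ) - (N : ℝ) + Gfun gef gsi gin m k) / Hfun gef gsi gin m k

noncomputable def pstar (gef gsi gin : ℕ → ℝ) (m kstar s : ℕ) : ℝ :=
  if s ≤ m then 1 / (Hfun gef gsi gin m kstar * (gsi s + gin s))
  else if s ≤ kstar then 1 / (Hfun gef gsi gin m kstar * (gef s + gin s))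
  else 0

noncomputable def chatEf (gef gsi gin : ℕ → ℝ) (kef ksi N m kstar s : ℕ) : ℝ :=
  if s ≤ m then 0
  else if s ≤ kstar then
    (Gam gef gsi gin kef ksi N m kstar + gin s) / (gef s + gin s)
  else
    ((kef : ℝ) - ∑ u ∈ Finset.Icc (m + 1) kstar,
        (Gam gef gsi gin kef ksi N m kstar + gin u) / (gef u + gin u)) /
      ((N : ℝ) - (kstar : ℝ))

noncomputable def chatSi (gef gsi gin : ℕ → ℝ) (kef ksi N m kstar s : ℕ) : ℝ :=
  if s ≤ m then
    (Gam gef gsi gin kef ksi N m kstar + gin s) / (gsi s + gin s)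
  else if s ≤ kstar then 0
  else
    ((ksi : ℝ) - ∑ u ∈ Finset.Icc 1 m,
        (Gam gef gsi gin kef ksi N m kstar + gin u) / (gsi u + gin u)) /
      ((N : ℝ) - (kstar : ℝ))

noncomputable def chatIn (gef gsi gin : ℕ → ℝ) (kef ksi N m kstar s : ℕ) : ℝ :=
  1 - chatEf gef gsi gin kef ksi N m kstar s - chatSi gef gsi gin kef ksi N m kstar s

noncomputable def zGain (gef gsi gin p cef csi cin : ℕ → ℝ) (N : ℕ) : ℝ :=
  ∑ s ∈ Finset.Icc 1 N, p s * (cef s * gef s + csi s * gsi s - cin s * gin s)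

def memDelta (cef csi cin : ℕ → ℝ) (N kef ksi kin : ℕ) : Prop :=
  (∀ s ∈ Finset.Icc 1 N,
    (cef s = 0 ∨ cef s = 1) ∧ (csi s = 0 ∨ csi s = 1) ∧ (cin s = 0 ∨ cin s = 1) ∧
      cef s + csi s + cin s = 1) ∧
  (∑ s ∈ Finset.Icc 1 N, cef s) = (kef : ℝ) ∧
  (∑ s ∈ Finset.Icc 1 N, csi s) = (ksi : ℝ) ∧
  (∑ s ∈ Finset.Icc 1 N, cin s) = (kin : ℝ)

def memDeltaT (cef csi cin : ℕ → ℝ) (N kef ksi kin : ℕ) : Prop :=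
  (∀ s ∈ Finset.Icc 1 N,
    cef s ∈ Set.Icc (0 : ℝ) 1 ∧ csi s ∈ Set.Icc (0 : ℝ) 1 ∧ cin s ∈ Set.Icc (0 : ℝ) 1 ∧
      cef s + csi s + cin s = 1) ∧
  (∑ s ∈ Finset.Icc 1 N, cef s) = (kef : ℝ) ∧
  (∑ s ∈ Finset.Icc 1 N, csi s) = (ksi : ℝ) ∧
  (∑ s ∈ Finset.Icc 1 N, cin s) = (kin : ℝ)

/-!
Since `z(p, ĉ)` is a `p`-weighted average of the gains of the individual instances, it suffices
to bound each of these by `Γ(k*)`. Up to `k*` the weights of `ĉ` are exactly those that make the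
gain equal to `Γ(k*)`. The value `Γ(k*)` solves the linear equation saying that the weights beyond
`k*` leave no room for `ĉ_in`; hence there the gain is an affine combination of `g_ef` and `g_si`
with a nonnegative weight on `g_si ≤ g_ef`, and is at most `g_ef ≤ Γ(k*)`.
-/

section Field

variable {ι K : Type*} [Field K]

lemma equalizing_weight_mul_sub_mul {Γ g h : K} (hgh : g + h ≠ 0) :
    (Γ + h) / (g + h) * g - (1 - (Γ + h) / (g + h)) * h = Γ := by
  field_simp
  ring

lemma sum_equalizing_weight {g h : ι → K} {S : Finset ι} (Γ : K) (hgh : ∀ u ∈ S, g u + h u ≠ 0) :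
    ∑ u ∈ S, (Γ + h u) / (g u + h u) =
      Γ * ∑ u ∈ S, 1 / (g u + h u) + #S - ∑ u ∈ S, g u / (g u + h u) := by
  have weight_eq : ∀ u ∈ S, (Γ + h u) / (g u + h u) =
      Γ * (1 / (g u + h u)) + 1 - g u / (g u + h u) := by
    intro u hu
    have := hgh u hu
    field_simp
    ring
  rw [sum_congr rfl weight_eq, sum_sub_distrib, sum_add_distrib, ← mul_sum, sum_const,
    nsmul_one]

end Field

lemma zGain_le_of_forall_le {gef gsi gin p cef csi cin : ℕ → ℝ} {N : ℕ} {b : ℝ}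
    (hp : ∀ s ∈ Icc 1 N, 0 ≤ p s) (hp_sum : ∑ s ∈ Icc 1 N, p s = 1)
    (hb : ∀ s ∈ Icc 1 N, cef s * gef s + csi s * gsi s - cin s * gin s ≤ b) :
    zGain gef gsi gin p cef csi cin N ≤ b :=
  calc zGain gef gsi gin p cef csi cin N
      ≤ ∑ s ∈ Icc 1 N, p s * b :=
        sum_le_sum fun s hs => mul_le_mul_of_nonneg_left (hb s hs) (hp s hs)
    _ = b := by rw [← sum_mul, hp_sum, one_mul]

section Chat

variable {gef gsi gin : ℕ → ℝ} {kef ksi N m k s : ℕ}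

lemma Hfun_pos (hmk : m ≤ k) (hk : 0 < k) (hsi : ∀ s ∈ Icc 1 m, 0 < gsi s + gin s)
    (hef : ∀ s ∈ Icc (m + 1) k, 0 < gef s + gin s) : 0 < Hfun gef gsi gin m k := by
  have si_terms_pos : ∀ s ∈ Icc 1 m, 0 < 1 / (gsi s + gin s) :=
    fun s hs => one_div_pos.mpr (hsi s hs)
  have ef_terms_pos : ∀ s ∈ Icc (m + 1) k, 0 < 1 / (gef s + gin s) :=
    fun s hs => one_div_pos.mpr (hef s hs)
  rw [Hfun, min_eq_right hmk]
  rcases hmk.lt_or_eq with hlt | rfl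
  · exact add_pos_of_nonneg_of_pos (sum_nonneg fun s hs => (si_terms_pos s hs).le)
      (sum_pos ef_terms_pos (nonempty_Icc.mpr hlt))
  · exact add_pos_of_pos_of_nonneg (sum_pos si_terms_pos (nonempty_Icc.mpr hk))
      (sum_nonneg fun s hs => (ef_terms_pos s hs).le)

lemma Gam_mul_Hfun (hH : Hfun gef gsi gin m k ≠ 0) :
    Gam gef gsi gin kef ksi N m k * Hfun gef gsi gin m k =
      kef + ksi - N + Gfun gef gsi gin m k :=
  div_mul_cancel₀ _ hH

lemma sum_equalizing_weight_Icc (Γ : ℝ) (hmk : m ≤ k) (hsi : ∀ s ∈ Icc 1 m, gsi s + gin s ≠ 0)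
    (hef : ∀ s ∈ Icc (m + 1) k, gef s + gin s ≠ 0) :
    ∑ u ∈ Icc 1 m, (Γ + gin u) / (gsi u + gin u) +
        ∑ u ∈ Icc (m + 1) k, (Γ + gin u) / (gef u + gin u) =
      Γ * Hfun gef gsi gin m k + k - Gfun gef gsi gin m k := by
  have card_ef : (#(Icc (m + 1) k) : ℝ) = k - m := by
    rw [Nat.card_Icc, Nat.add_sub_add_right, Nat.cast_sub hmk]
  rw [sum_equalizing_weight Γ hsi, sum_equalizing_weight Γ hef, card_ef, Nat.card_Icc,
    Nat.add_sub_cancel, Hfun, Gfun, min_eq_right hmk]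
  ring

lemma chatIn_eq_zero_of_lt (hmk : m ≤ k) (hkN : k < N) (hks : k < s)
    (hsi : ∀ s ∈ Icc 1 m, gsi s + gin s ≠ 0) (hef : ∀ s ∈ Icc (m + 1) k, gef s + gin s ≠ 0)
    (hH : Hfun gef gsi gin m k ≠ 0) : chatIn gef gsi gin kef ksi N m k s = 0 := by
  have hNk : (N : ℝ) - k ≠ 0 := sub_ne_zero.mpr (Nat.cast_lt.mpr hkN).ne'
  have weights_sum := sum_equalizing_weight_Icc (Gam gef gsi gin kef ksi N m k) hmk hsi hef
  rw [Gam_mul_Hfun hH] at weights_sum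
  rw [chatIn, sub_sub, sub_eq_zero, chatEf, chatSi, if_neg (hmk.trans_lt hks).not_ge,
    if_neg hks.not_ge, if_neg (hmk.trans_lt hks).not_ge, if_neg hks.not_ge, ← add_div,
    eq_comm, div_eq_one_iff_eq hNk]
  linarith

/-- The gain on instance `s` under the mixed strategy `ĉ`, i.e. the coefficient of `p(s)` in
`z(p, ĉ)`. -/
noncomputable def chatGain (gef gsi gin : ℕ → ℝ) (kef ksi N m k s : ℕ) : ℝ :=
  chatEf gef gsi gin kef ksi N m k s * gef s + chatSi gef gsi gin kef ksi N m k s * gsi s -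
    chatIn gef gsi gin kef ksi N m k s * gin s

lemma chatGain_eq_Gam_of_le (hsm : s ≤ m) (hs : gsi s + gin s ≠ 0) :
    chatGain gef gsi gin kef ksi N m k s = Gam gef gsi gin kef ksi N m k := by
  rw [chatGain, chatIn, chatEf, chatSi, if_pos hsm, if_pos hsm, zero_mul, zero_add, sub_zero,
    equalizing_weight_mul_sub_mul hs]

lemma chatGain_eq_Gam_of_lt_of_le (hms : m < s) (hsk : s ≤ k) (hs : gef s + gin s ≠ 0) :
    chatGain gef gsi gin kef ksi N m k s = Gam gef gsi gin kef ksi N m k := by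
  rw [chatGain, chatIn, chatEf, chatSi, if_neg hms.not_ge, if_pos hsk, if_neg hms.not_ge,
    if_pos hsk, zero_mul, add_zero, sub_zero, equalizing_weight_mul_sub_mul hs]

lemma chatGain_le_of_chatIn_eq_zero (hin : chatIn gef gsi gin kef ksi N m k s = 0)
    (hsi : 0 ≤ chatSi gef gsi gin kef ksi N m k s) (hle : gsi s ≤ gef s) :
    chatGain gef gsi gin kef ksi N m k s ≤ gef s := by
  have weights_sum : chatEf gef gsi gin kef ksi N m k s =
      1 - chatSi gef gsi gin kef ksi N m k s := by
    rw [chatIn] at hin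
    linarith
  calc chatGain gef gsi gin kef ksi N m k s
      = gef s - chatSi gef gsi gin kef ksi N m k s * (gef s - gsi s) := by
        rw [chatGain, hin, weights_sum]
        ring
    _ ≤ gef s := sub_le_self _ (mul_nonneg hsi (sub_nonneg.mpr hle))

end Chat

theorem stmt_11_general {gef gsi gin p : ℕ → ℝ} {N kef ksi m kstar : ℕ}
    (hmk : m ≤ kstar) (hk : 0 < kstar)
    (hsi : ∀ s ∈ Icc 1 m, 0 < gsi s + gin s)
    (hef : ∀ s ∈ Icc (m + 1) kstar, 0 < gef s + gin s)
    (hle : ∀ s, kstar < s → s ≤ N → gsi s ≤ gef s)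
    (hcsi : ∀ s, kstar < s → s ≤ N → 0 ≤ chatSi gef gsi gin kef ksi N m kstar s)
    (hgam : ∀ s, kstar < s → s ≤ N → gef s ≤ Gam gef gsi gin kef ksi N m kstar)
    (hp : ∀ s ∈ Icc 1 N, 0 ≤ p s) (hp_sum : ∑ s ∈ Icc 1 N, p s = 1) :
    zGain gef gsi gin p (chatEf gef gsi gin kef ksi N m kstar)
        (chatSi gef gsi gin kef ksi N m kstar) (chatIn gef gsi gin kef ksi N m kstar) N ≤
      Gam gef gsi gin kef ksi N m kstar := by
  refine zGain_le_of_forall_le hp hp_sum fun s hs => ?_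
  change chatGain gef gsi gin kef ksi N m kstar s ≤ _
  obtain ⟨one_le_s, hsN⟩ := mem_Icc.mp hs
  rcases le_or_gt s m with hsm | hms
  · exact (chatGain_eq_Gam_of_le hsm (hsi s (mem_Icc.mpr ⟨one_le_s, hsm⟩)).ne').le
  rcases le_or_gt s kstar with hsk | hks
  · exact (chatGain_eq_Gam_of_lt_of_le hms hsk (hef s (mem_Icc.mpr ⟨hms, hsk⟩)).ne').le
  have hin : chatIn gef gsi gin kef ksi N m kstar s = 0 :=
    chatIn_eq_zero_of_lt hmk (hks.trans_le hsN) hks (fun u hu => (hsi u hu).ne')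
      (fun u hu => (hef u hu).ne') (Hfun_pos hmk hk hsi hef).ne'
  exact (chatGain_le_of_chatIn_eq_zero hin (hcsi s hks hsN) (hle s hks hsN)).trans
    (hgam s hks hsN)

theorem stmt_11
    (gef gsi gin : ℕ → ℝ) (N kef ksi kin m kstar : ℕ)
    (hN : 0 < N) (hm : m = ksi + kin) (hsum : kef + ksi + kin = N)
    (hgef : ∀ s ∈ Finset.Icc 1 N, 0 < gef s)
    (hgsi : ∀ s ∈ Finset.Icc 1 N, 0 < gsi s)
    (hgin : ∀ s ∈ Finset.Icc 1 N, 0 < gin s)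
    (hsilt : ∀ s ∈ Finset.Icc 1 N, gsi s < gef s)
    (hinlt : ∀ s ∈ Finset.Icc 1 N, gin s < gef s)
    (hdec : ∀ s ∈ Finset.Icc 1 N, ∀ t ∈ Finset.Icc 1 N, s < t → gef t < gef s)
    (hk1 : m < kstar) (hk2 : kstar < N)
    (hcsi : ∀ s : ℕ, kstar < s → s ≤ N → 0 ≤ chatSi gef gsi gin kef ksi N m kstar s)
    (hgam : ∀ s : ℕ, kstar < s → s ≤ N → gef s ≤ Gam gef gsi gin kef ksi N m kstar) :
    ∀ p : ℕ → ℝ, (∀ s ∈ Finset.Icc 1 N, 0 ≤ p s) → (∑ s ∈ Finset.Icc 1 N, p s) = 1 →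
      zGain gef gsi gin p (chatEf gef gsi gin kef ksi N m kstar)
          (chatSi gef gsi gin kef ksi N m kstar)
          (chatIn gef gsi gin kef ksi N m kstar) N ≤
        Gam gef gsi gin kef ksi N m kstar := by
  have icc_si_subset : Icc 1 m ⊆ Icc 1 N := Icc_subset_Icc_right (hk1.trans hk2).le
  have icc_ef_subset : Icc (m + 1) kstar ⊆ Icc 1 N := Icc_subset_Icc (Nat.le_add_left 1 m) hk2.le
  intro p hp hp_sum
  exact stmt_11_general hk1.le (Nat.zero_lt_of_lt hk1)
    (fun s hs => add_pos (hgsi s (icc_si_subset hs)) (hgin s (icc_si_subset hs)))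
    (fun s hs => add_pos (hgef s (icc_ef_subset hs)) (hgin s (icc_ef_subset hs)))
    (fun s hks hsN => (hsilt s (mem_Icc.mpr ⟨Nat.one_le_of_lt hks, hsN⟩)).le)
    hcsi hgam hp hp_sum
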